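/- arXiv:1607.03821 — 9 statements merged into one kernel-verified Lean document; each statement's English description precedes it below -/
import Mathlib

section
/- For every n ≥ 2, every m ≥ n and every δ > 0, there exists a profile of strict monotone valuations on m identical units for which the revenue collected by the PO auction is strictly less than (1/n + δ) times the optimal revenue max over allocations (s_1,…,s_n) with s_1+…+s_n ≤ m of Σ_i v_i(s_i). -/
/-- Among the unserved bidders `active` and quantities `s ≤ units` of remaining units,
there is a pair `(i, s)` with the highest value `v i s`. -/
lemma exists_greedy_pick_mu {n : ℕ} (v : Fin n → ℕ → ℝ) (active : Finset (Fin n))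
    (units : ℕ) (h : active.Nonempty) :
    ∃ q : Fin n × ℕ, q.1 ∈ active ∧ q.2 ≤ units ∧
      ∀ j ∈ active, ∀ t ≤ units, v j t ≤ v q.1 q.2 := by
  classical
  obtain ⟨q, hq, hmax⟩ := Finset.exists_max_image (active ×ˢ Finset.range (units + 1))
    (fun q => v q.1 q.2) (h.product ⟨0, Finset.mem_range.mpr (Nat.succ_pos _)⟩)
  refine ⟨q, (Finset.mem_product.mp hq).1,
    Nat.lt_succ_iff.mp (Finset.mem_range.mp (Finset.mem_product.mp hq).2),
    fun j hj t ht => ?_⟩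
  exact hmax (j, t) (Finset.mem_product.mpr ⟨hj, Finset.mem_range.mpr (Nat.lt_succ_of_le ht)⟩)

/-- The pair (bidder, number of units) picked by one iteration of the PO auction
(ties broken by a fixed rule). -/
noncomputable def greedyPickMU {n : ℕ} (v : Fin n → ℕ → ℝ) (active : Finset (Fin n))
    (units : ℕ) (h : active.Nonempty) : Fin n × ℕ :=
  (exists_greedy_pick_mu v active units h).choose

lemma greedyPickMU_mem {n : ℕ} (v : Fin n → ℕ → ℝ) (active : Finset (Fin n))
    (units : ℕ) (h : active.Nonempty) : (greedyPickMU v active units h).1 ∈ active :=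
  (exists_greedy_pick_mu v active units h).choose_spec.1

/-- The allocation computed by the multi-unit PO auction, recursing on the unserved
bidders `active` and the number of remaining `units`: repeatedly pick a pair `(i, s)`
with the highest value `v i s`, allocate `s` units to `i`, and recurse. -/
noncomputable def poAllocMUAux {n : ℕ} (v : Fin n → ℕ → ℝ) (active : Finset (Fin n))
    (units : ℕ) : Fin n → ℕ :=
  if h : active.Nonempty then
    fun j =>
      if j = (greedyPickMU v active units h).1 then (greedyPickMU v active units h).2
      else poAllocMUAux v (active.erase (greedyPickMU v active units h).1)
        (units - (greedyPickMU v active units h).2) j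
  else fun _ => 0
termination_by active.card
decreasing_by exact Finset.card_erase_lt_of_mem (greedyPickMU_mem v active units h)

/-- The PO auction allocation in the `n × m` multi-unit market; bidder `i` receives
`poAllocMU v m i` units and pays his reported value for them, so the revenue of the PO
auction is `∑ i, v i (poAllocMU v m i)`. -/
noncomputable def poAllocMU {n : ℕ} (v : Fin n → ℕ → ℝ) (m : ℕ) : Fin n → ℕ :=
  poAllocMUAux v Finset.univ m

/-- The optimal revenue of a profile in the `n × m` multi-unit market: the maximum over
allocations `(s₁,…,sₙ)` with `∑ sᵢ ≤ m` of `∑ vᵢ(sᵢ)`. -/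
noncomputable def optRevMU (n m : ℕ) (v : Fin n → ℕ → ℝ) : ℝ :=
  sSup {x : ℝ | ∃ s : Fin n → ℕ, (∑ i, s i) ≤ m ∧ x = ∑ i, v i (s i)}

lemma greedyPickMU_units_le {n : ℕ} (v : Fin n → ℕ → ℝ) (active : Finset (Fin n))
    (units : ℕ) (h : active.Nonempty) : (greedyPickMU v active units h).2 ≤ units :=
  (exists_greedy_pick_mu v active units h).choose_spec.2.1

lemma le_greedyPickMU {n : ℕ} (v : Fin n → ℕ → ℝ) (active : Finset (Fin n))
    (units : ℕ) (h : active.Nonempty) {j : Fin n} (hj : j ∈ active) {t : ℕ} (ht : t ≤ units) :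
    v j t ≤ v (greedyPickMU v active units h).1 (greedyPickMU v active units h).2 :=
  (exists_greedy_pick_mu v active units h).choose_spec.2.2 j hj t ht

/-- If all valuations are strictly increasing, the first pick takes all remaining units. -/
lemma greedyPickMU_units_eq {n : ℕ} {v : Fin n → ℕ → ℝ} (hv : ∀ i, StrictMono (v i))
    (active : Finset (Fin n)) (units : ℕ) (h : active.Nonempty) :
    (greedyPickMU v active units h).2 = units :=
  (greedyPickMU_units_le v active units h).antisymm <| (hv _).le_iff_le.1 <|
    le_greedyPickMU v active units h (greedyPickMU_mem v active units h) le_rfl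

lemma poAllocMUAux_zero_units {n : ℕ} (v : Fin n → ℕ → ℝ) (active : Finset (Fin n))
    (j : Fin n) : poAllocMUAux v active 0 j = 0 := by
  induction active using Finset.strongInduction with
  | H active ih =>
    rw [poAllocMUAux]
    split_ifs with h
    · have hpick := Nat.le_zero.1 (greedyPickMU_units_le v active 0 h)
      simp only [hpick, Nat.sub_zero]
      split_ifs
      · rfl
      · exact ih _ (Finset.erase_ssubset (greedyPickMU_mem v active 0 h))
    · rfl

/-- If all valuations are strictly increasing, a single bidder receives all the units. -/
lemma exists_poAllocMU_eq_single {n : ℕ} [NeZero n] {v : Fin n → ℕ → ℝ}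
    (hv : ∀ i, StrictMono (v i)) (m : ℕ) : ∃ i, poAllocMU v m = Pi.single i m := by
  have h : (Finset.univ : Finset (Fin n)).Nonempty := Finset.univ_nonempty
  refine ⟨(greedyPickMU v Finset.univ m h).1, funext fun j => ?_⟩
  rw [poAllocMU, poAllocMUAux, dif_pos h]
  simp only [greedyPickMU_units_eq hv, Nat.sub_self, poAllocMUAux_zero_units, Pi.single_apply]

lemma sum_le_optRevMU {n m : ℕ} {v : Fin n → ℕ → ℝ} (hv : ∀ i, Monotone (v i))
    {s : Fin n → ℕ} (hs : ∑ i, s i ≤ m) : ∑ i, v i (s i) ≤ optRevMU n m v := by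
  refine le_csSup ⟨∑ i, v i m, ?_⟩ ⟨s, hs, rfl⟩
  rintro _ ⟨t, ht, rfl⟩
  exact Finset.sum_le_sum fun i _ => hv i <|
    (Finset.single_le_sum (fun _ _ => Nat.zero_le _) (Finset.mem_univ i)).trans ht

/-- Valuations that are all close to `1` on nonzero quantities: bidder `i` values `s ≥ 1`
units at `1 + ε (s n + i)`. -/
noncomputable def nearUnitValuation (n : ℕ) (ε : ℝ) (i : Fin n) (s : ℕ) : ℝ :=
  if s = 0 then 0 else 1 + ε * ((s * n + i : ℕ) : ℝ)

lemma nearUnitValuation_zero (n : ℕ) (ε : ℝ) (i : Fin n) : nearUnitValuation n ε i 0 = 0 :=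
  if_pos rfl

lemma nearUnitValuation_of_pos {n : ℕ} (ε : ℝ) (i : Fin n) {s : ℕ} (hs : 1 ≤ s) :
    nearUnitValuation n ε i s = 1 + ε * ((s * n + i : ℕ) : ℝ) :=
  if_neg (by omega)

lemma nearUnitValuation_strictMono {n : ℕ} {ε : ℝ} (hε : 0 < ε) (i : Fin n) :
    StrictMono (nearUnitValuation n ε i) := by
  intro s t hst
  rw [nearUnitValuation_of_pos ε i (by omega : 1 ≤ t)]
  rcases Nat.eq_zero_or_pos s with rfl | hs
  · rw [nearUnitValuation_zero]
    positivity
  · rw [nearUnitValuation_of_pos ε i hs]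
    have : s * n < t * n := Nat.mul_lt_mul_of_pos_right hst i.pos
    gcongr

lemma nearUnitValuation_injective {n : ℕ} {ε : ℝ} (hε : 0 < ε) {i j : Fin n} {s t : ℕ}
    (hs : 1 ≤ s) (ht : 1 ≤ t) (h : nearUnitValuation n ε i s = nearUnitValuation n ε j t) :
    (i, s) = (j, t) := by
  rw [nearUnitValuation_of_pos ε i hs, nearUnitValuation_of_pos ε j ht] at h
  have h' : s * n + i = t * n + j := by
    exact_mod_cast mul_left_cancel₀ hε.ne' (add_left_cancel h)
  have hij : i = j := Fin.ext <| by
    have := congrArg (· % n) h'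
    simpa [Nat.mod_eq_of_lt] using this
  subst hij
  rw [Nat.eq_of_mul_eq_mul_right i.pos (Nat.add_right_cancel h')]

/-- for every `n ≥ 2`, `m ≥ n` and `δ > 0` there is a profile of strict
monotone valuations on `m` identical units on which the revenue of the PO auction is
less than `(1/n + δ)` times the optimal revenue. -/
theorem po_auction_revenue_can_be_one_over_n
    (n m : ℕ) (hn : 2 ≤ n) (hm : n ≤ m) (δ : ℝ) (hδ : 0 < δ) :
    ∃ v : Fin n → ℕ → ℝ,
      (∀ i, v i 0 = 0 ∧ Monotone (v i) ∧ ∀ s, 0 ≤ v i s) ∧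
      (∀ (i : Fin n) (s : ℕ) (j : Fin n) (t : ℕ),
        1 ≤ s → s ≤ m → 1 ≤ t → t ≤ m → (i, s) ≠ (j, t) → v i s ≠ v j t) ∧
      (∑ i, v i (poAllocMU v m i)) < (1 / (n : ℝ) + δ) * optRevMU n m v := by
  have : NeZero n := ⟨by omega⟩
  have hn0 : (0 : ℝ) < n := by exact_mod_cast (by omega : 0 < n)
  set ε : ℝ := δ / (m + 1) with hε_def
  have hε : 0 < ε := by positivity
  have hstrict := nearUnitValuation_strictMono (n := n) hε
  refine ⟨nearUnitValuation n ε, fun i => ⟨nearUnitValuation_zero n ε i, (hstrict i).monotone,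
    fun s => ?_⟩, fun i s j t hs _ ht _ hne h => hne (nearUnitValuation_injective hε hs ht h), ?_⟩
  · rw [← nearUnitValuation_zero n ε i]
    exact (hstrict i).monotone (Nat.zero_le s)
  · obtain ⟨w, hw⟩ := exists_poAllocMU_eq_single hstrict m
    have hrev : ∑ i, nearUnitValuation n ε i (poAllocMU (nearUnitValuation n ε) m i)
        = nearUnitValuation n ε w m := by
      rw [hw, Finset.sum_eq_single w]
      · rw [Pi.single_eq_same]
      · intro j _ hj
        rw [Pi.single_eq_of_ne hj, nearUnitValuation_zero]
      · simp
    have hopt : (n : ℝ) ≤ optRevMU n m (nearUnitValuation n ε) := by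
      refine le_trans ?_ (sum_le_optRevMU (fun i => (hstrict i).monotone)
        (s := fun _ => 1) (by simpa using hm))
      calc (n : ℝ) = ∑ _i : Fin n, (1 : ℝ) := by simp
        _ ≤ _ := Finset.sum_le_sum fun i _ => by
          rw [nearUnitValuation_of_pos ε i le_rfl]
          exact le_add_of_nonneg_right (by positivity)
    have hwn : m * n + (w : ℕ) < (m + 1) * n := by
      rw [Nat.succ_mul]
      exact Nat.add_lt_add_left w.isLt _
    calc ∑ i, nearUnitValuation n ε i (poAllocMU (nearUnitValuation n ε) m i)
        = 1 + ε * ((m * n + w : ℕ) : ℝ) := by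
          rw [hrev, nearUnitValuation_of_pos ε w (by omega)]
      _ < 1 + ε * (((m + 1) * n : ℕ) : ℝ) := by gcongr
      _ = (1 / (n : ℝ) + δ) * n := by
          rw [hε_def]
          push_cast
          field_simp
      _ ≤ _ := by gcongr
end

section
/- If the allocation rule W is monotone in every bid, then the pay-as-bid single-parameter mechanism is incentive compatible for value bidders: for every bidder i, every true value w ≥ 0, every profile of opposing bids b_{−i}, and every bid b'_i ≥ 0, the utility bidder i obtains by bidding w is at least the utility he obtains by bidding b'_i. -/
/-- Utility of a value bidder `i` with true value `w` in a single-parameter pay-as-bid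
mechanism with allocation rule `W` under bid profile `b`: winners pay their own bid and
obtain utility `w` if the payment is at most `w` and `⊥ = -∞` otherwise; losers obtain `0`. -/
noncomputable def payAsBidUtility (n : ℕ) (W : (Fin n → ℝ) → Finset (Fin n))
    (b : Fin n → ℝ) (i : Fin n) (w : ℝ) : EReal :=
  if i ∈ W b then (if b i ≤ w then (w : EReal) else ⊥) else 0

/-- if the allocation rule `W` is monotone in every bid, then the
pay-as-bid single-parameter mechanism is incentive compatible for value bidders. -/
theorem monotone_payAsBid_incentive_compatible
    (n : ℕ) (W : (Fin n → ℝ) → Finset (Fin n))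
    (hmono : ∀ (b : Fin n → ℝ), (∀ j, 0 ≤ b j) → ∀ (i : Fin n) (b' : ℝ),
      i ∈ W b → b i ≤ b' → i ∈ W (Function.update b i b'))
    (i : Fin n) (w : ℝ) (hw : 0 ≤ w)
    (b : Fin n → ℝ) (hb : ∀ j, 0 ≤ b j) (b' : ℝ) (hb' : 0 ≤ b') :
    payAsBidUtility n W (Function.update b i b') i w ≤
      payAsBidUtility n W (Function.update b i w) i w := by
  have hw' : (0 : EReal) ≤ (w : EReal) := by exact_mod_cast hw
  have truthful_nonneg : 0 ≤ payAsBidUtility n W (Function.update b i w) i w := by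
    unfold payAsBidUtility
    split_ifs with hwin hpay
    · exact hw'
    · simp at hpay
    · exact le_rfl
  by_cases hwin : i ∈ W (Function.update b i b')
  · by_cases hpay : b' ≤ w
    · have hdev : ∀ j, 0 ≤ Function.update b i b' j := by
        intro j
        rcases eq_or_ne j i with rfl | hj
        · simpa using hb'
        · simpa [hj] using hb j
      have htruth : i ∈ W (Function.update b i w) := by
        simpa using hmono _ hdev i w hwin (by simpa using hpay)
      simp [payAsBidUtility, hwin, hpay, htruth]
    · simp [payAsBidUtility, hwin, hpay]
  · simpa [payAsBidUtility, hwin] using truthful_nonneg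
end

section
/- Suppose a single-parameter mechanism (W, p) is such that losers pay 0 and every winner pays at most his own bid (p_i(b) ≤ b_i whenever i ∈ W(b)), and suppose the mechanism is incentive compatible for value bidders. Then the allocation rule W is monotone in every bid: whenever i ∈ W(b) and b'_i ≥ b_i, then i ∈ W(b'_i, b_{−i}). -/
/-- Utility of a value bidder `i` with true value `w` in a single-parameter mechanism
with allocation rule `W` and payment rule `p` under bid profile `b`: a winner obtains
utility `w` if his payment is at most `w` and `⊥ = -∞` otherwise; losers obtain `0`. -/
noncomputable def spMechUtility (n : ℕ) (W : (Fin n → ℝ) → Finset (Fin n))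
    (p : (Fin n → ℝ) → Fin n → ℝ) (b : Fin n → ℝ) (i : Fin n) (w : ℝ) : EReal :=
  if i ∈ W b then (if p b i ≤ w then (w : EReal) else ⊥) else 0

/-- if in a single-parameter mechanism losers pay `0`, every winner pays at
most his own bid, and the mechanism is incentive compatible for value bidders, then the
allocation rule is monotone in every bid. -/
theorem incentive_compatible_implies_monotone
    (n : ℕ) (W : (Fin n → ℝ) → Finset (Fin n)) (p : (Fin n → ℝ) → Fin n → ℝ)
    (hlose : ∀ (b : Fin n → ℝ), (∀ j, 0 ≤ b j) → ∀ i : Fin n, i ∉ W b → p b i = 0)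
    (hwin : ∀ (b : Fin n → ℝ), (∀ j, 0 ≤ b j) → ∀ i : Fin n, i ∈ W b → p b i ≤ b i)
    (hic : ∀ (b : Fin n → ℝ), (∀ j, 0 ≤ b j) → ∀ (i : Fin n) (w : ℝ), 0 ≤ w →
      ∀ (b' : ℝ), 0 ≤ b' →
      spMechUtility n W p (Function.update b i b') i w ≤
        spMechUtility n W p (Function.update b i w) i w)
    (b : Fin n → ℝ) (hb : ∀ j, 0 ≤ b j) (i : Fin n) (hi : i ∈ W b)
    (b' : ℝ) (hb' : b i ≤ b') :
    i ∈ W (Function.update b i b') := by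
  obtain heq | hlt := hb'.eq_or_lt
  · rwa [← heq, Function.update_eq_self]
  · by_contra hlost
    have hpos : 0 < b' := (hb i).trans_lt hlt
    have h := hic b hb i b' hpos.le (b i) (hb i)
    rw [Function.update_eq_self, spMechUtility, spMechUtility, if_pos hi,
      if_pos ((hwin b hb i hi).trans hb'), if_neg hlost] at h
    exact absurd (EReal.coe_nonpos.mp h) hpos.not_ge
end

section
/- For every n ≥ 2 and k ≥ 2, there is no deterministic mechanism (f, p) for the assignment market with n value bidders and k heterogeneous items that is simultaneously individually rational, truthful for value bidders, and revenue maximizing (its revenue Σ_i p_i(v) equals the optimal revenue on every profile of valuations). -/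
/-- An allocation in the assignment market: each bidder receives at most one item and no
item is assigned twice. -/
def AssignFeasible (n k : ℕ) (a : Fin n → Option (Fin k)) : Prop :=
  ∀ (i j : Fin n) (x : Fin k), a i = some x → a j = some x → i = j

/-- The optimal revenue of a profile in the assignment market: the maximum over
allocations of the sum of the bidders' values for their assigned items. -/
noncomputable def optRevAssign (n k : ℕ) (v : Fin n → Fin k → ℝ) : ℝ :=
  sSup {x : ℝ | ∃ a : Fin n → Option (Fin k),
    AssignFeasible n k a ∧ x = ∑ i, (a i).elim 0 (v i)}

/-- The value of every feasible allocation is at most the optimal revenue. -/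
lemma sum_le_optRevAssign {n k : ℕ} (v : Fin n → Fin k → ℝ) {a : Fin n → Option (Fin k)}
    (ha : AssignFeasible n k a) : ∑ i, (a i).elim 0 (v i) ≤ optRevAssign n k v := by
  refine le_csSup (Set.Finite.bddAbove ?_) ⟨a, ha, rfl⟩
  refine (Set.finite_range fun a : Fin n → Option (Fin k) => ∑ i, (a i).elim 0 (v i)).subset ?_
  rintro _ ⟨a, -, rfl⟩
  exact ⟨a, rfl⟩

/-- The profile in which bidders `i` and `j` have valuations `u` and `w` and everybody else
values every item at zero. -/
def twoBidderProfile {n k : ℕ} (i j : Fin n) (u w : Fin k → ℝ) : Fin n → Fin k → ℝ :=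
  fun l => if l = i then u else if l = j then w else 0

/-- The valuation with value `s` for item `x`, value `t` for item `y` and zero elsewhere. -/
def twoItemValuation {k : ℕ} (x y : Fin k) (s t : ℝ) : Fin k → ℝ :=
  fun z => if z = x then s else if z = y then t else 0

lemma twoItemValuation_nonneg {k : ℕ} (x y : Fin k) {s t : ℝ} (hs : 0 ≤ s) (ht : 0 ≤ t)
    (z : Fin k) : 0 ≤ twoItemValuation x y s t z := by
  unfold twoItemValuation
  split_ifs <;> simp [hs, ht]

lemma elim_twoItemValuation_le {k : ℕ} (x y : Fin k) {s t : ℝ} (ht : 0 ≤ t)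
    {o : Option (Fin k)} (ho : o ≠ some x) : o.elim 0 (twoItemValuation x y s t) ≤ t := by
  cases o with
  | none => simpa
  | some z =>
    have hz : z ≠ x := fun h => ho (by rw [h])
    simp only [Option.elim_some, twoItemValuation, if_neg hz]
    split_ifs <;> simp [ht]

lemma elim_twoItemValuation_le_max {k : ℕ} (x y : Fin k) {s t : ℝ} (ht : 0 ≤ t)
    (o : Option (Fin k)) : o.elim 0 (twoItemValuation x y s t) ≤ max s t := by
  by_cases ho : o = some x
  · simp [ho, twoItemValuation]
  · exact (elim_twoItemValuation_le x y ht ho).trans (le_max_right s t)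

lemma twoBidderProfile_nonneg {n k : ℕ} (i j : Fin n) {u w : Fin k → ℝ} (hu : ∀ x, 0 ≤ u x)
    (hw : ∀ x, 0 ≤ w x) (l : Fin n) (x : Fin k) : 0 ≤ twoBidderProfile i j u w l x := by
  unfold twoBidderProfile
  split_ifs <;> simp [hu, hw]

lemma update_twoBidderProfile {n k : ℕ} (i j : Fin n) (u u' w : Fin k → ℝ) :
    Function.update (twoBidderProfile i j u w) i u' = twoBidderProfile i j u' w := by
  funext l
  by_cases hl : l = i
  · subst hl
    simp [twoBidderProfile]
  · simp [twoBidderProfile, hl]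

lemma sum_twoBidderProfile {n k : ℕ} {i j : Fin n} (hij : i ≠ j) (u w : Fin k → ℝ)
    (a : Fin n → Option (Fin k)) :
    ∑ l, (a l).elim 0 (twoBidderProfile i j u w l) = (a i).elim 0 u + (a j).elim 0 w := by
  rw [Fintype.sum_eq_add i j hij]
  · simp [twoBidderProfile, hij.symm]
  · rintro l ⟨hi, hj⟩
    cases h : a l <;> simp [twoBidderProfile, hi, hj]

/-- Bidders `i` and `j` can be served two distinct items `x` and `y`. -/
lemma add_le_optRevAssign_twoBidderProfile {n k : ℕ} {i j : Fin n} (hij : i ≠ j) {x y : Fin k}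
    (hxy : x ≠ y) (u w : Fin k → ℝ) :
    u x + w y ≤ optRevAssign n k (twoBidderProfile i j u w) := by
  let a : Fin n → Option (Fin k) :=
    fun l => if l = i then some x else if l = j then some y else none
  have ha : AssignFeasible n k a := by
    intro l m z hl hm
    simp only [a] at hl hm
    split_ifs at hl hm <;> simp_all
  have h := sum_le_optRevAssign (twoBidderProfile i j u w) ha
  rw [sum_twoBidderProfile hij] at h
  simpa [a, hij.symm] using h

/-- for `n ≥ 2` bidders and `k ≥ 2` heterogeneous items, there is no
deterministic mechanism for the assignment market that is individually rational,
truthful for value bidders, and revenue maximizing. -/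
theorem no_truthful_revenue_maximizing_assignment (n k : ℕ) (hn : 2 ≤ n) (hk : 2 ≤ k) :
    ¬ ∃ (f : (Fin n → Fin k → ℝ) → Fin n → Option (Fin k))
        (p : (Fin n → Fin k → ℝ) → Fin n → ℝ),
      (∀ v, (∀ i x, 0 ≤ v i x) → AssignFeasible n k (f v)) ∧
      (∀ v, (∀ i x, 0 ≤ v i x) → ∀ i, p v i ≤ (f v i).elim 0 (v i)) ∧
      (∀ v, (∀ i x, 0 ≤ v i x) → ∀ (i : Fin n) (v' : Fin k → ℝ), (∀ x, 0 ≤ v' x) →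
        (p (Function.update v i v') i ≤ (f (Function.update v i v') i).elim 0 (v i) →
          (f (Function.update v i v') i).elim 0 (v i) ≤ (f v i).elim 0 (v i))) ∧
      (∀ v, (∀ i x, 0 ≤ v i x) → (∑ i, p v i) = optRevAssign n k v) := by
  rintro ⟨f, p, hfeas, hir, htruth, hrev⟩
  obtain ⟨i, j, hij⟩ : ∃ i j : Fin n, i ≠ j :=
    ⟨⟨0, by omega⟩, ⟨1, by omega⟩, by simp⟩
  obtain ⟨x, y, hxy⟩ : ∃ x y : Fin k, x ≠ y :=
    ⟨⟨0, by omega⟩, ⟨1, by omega⟩, by simp⟩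
  -- Bidder `i` truly has values `3, 2` and does not get `x`; reporting `3, 0` wins `x`.
  let u := twoItemValuation x y 3 2
  let u' := twoItemValuation x y 3 0
  let w := twoItemValuation x y 4 2
  have hu : ∀ z, 0 ≤ u z := twoItemValuation_nonneg x y (by norm_num) (by norm_num)
  have hu' : ∀ z, 0 ≤ u' z := twoItemValuation_nonneg x y (by norm_num) le_rfl
  have hw : ∀ z, 0 ≤ w z := twoItemValuation_nonneg x y (by norm_num) (by norm_num)
  have hv := twoBidderProfile_nonneg i j hu hw
  have hv' := twoBidderProfile_nonneg i j hu' hw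
  have hopt : ∀ v, (∀ i x, 0 ≤ v i x) → optRevAssign n k v ≤ ∑ l, (f v l).elim 0 (v l) :=
    fun v h => (hrev v h).symm.trans_le (Finset.sum_le_sum fun l _ => hir v h l)
  have htrue : f (twoBidderProfile i j u w) i ≠ some x := by
    intro h
    have hj : f (twoBidderProfile i j u w) j ≠ some x :=
      fun h' => hij (hfeas _ hv i j x h h')
    have h1 := (add_le_optRevAssign_twoBidderProfile hij hxy.symm u w).trans (hopt _ hv)
    rw [sum_twoBidderProfile hij, h] at h1
    have h2 := elim_twoItemValuation_le x y (s := 4) (t := 2) (by norm_num) hj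
    simp only [Option.elim_some, u, w] at h1
    simp only [twoItemValuation, hxy.symm, if_true, if_false] at h1 h2
    linarith
  have hlie : f (twoBidderProfile i j u' w) i = some x := by
    by_contra h
    have h1 := (add_le_optRevAssign_twoBidderProfile hij hxy u' w).trans (hopt _ hv')
    rw [sum_twoBidderProfile hij] at h1
    have h2 := elim_twoItemValuation_le x y (s := 3) le_rfl h
    have h3 := elim_twoItemValuation_le_max x y (s := 4) (t := 2) (by norm_num)
      (f (twoBidderProfile i j u' w) j)
    have h4 : u' x + w y = 5 := by
      simp only [u', w, twoItemValuation, hxy.symm, if_true, if_false]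
      norm_num
    norm_num at h3
    linarith
  have hpay := hir _ hv' i
  have ht := htruth _ hv i u' hu'
  rw [update_twoBidderProfile, hlie] at ht
  rw [hlie] at hpay
  have h2 := elim_twoItemValuation_le x y (s := 3) (t := 2) (by norm_num) htrue
  simp only [Option.elim_some, twoBidderProfile, if_true] at hpay ht
  have hux : u x = 3 := by simp [u, twoItemValuation]
  have hux' : u' x = 3 := by simp [u', twoItemValuation]
  have := ht (by rw [hux, ← hux']; exact hpay)
  rw [hux] at this
  exact absurd (this.trans h2) (by norm_num)
end

section
/- Restricted to the domain of profiles with v_1(2) > v_2(2) (bidder 1 is the public strongest bidder), the golden ratio mechanism is strategy-proof for value bidders (against all misreports that remain in the domain) and its revenue is at least r = (√5 − 1)/2 times the optimal revenue: (i) for each bidder i and each misreport keeping the profile in the domain, either the misreport yields a bundle whose reported value exceeds its true value (utility −∞), or the true value of the bundle received under the misreport is at most the true value of the bundle received under truthful reporting; and (ii) the sum of the winners' bids for their assigned units is at least r · max(v_1(2), v_1(1) + v_2(1), v_2(2)). -/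
/-- A multi-unit valuation: `v 0 = 0`, monotone nondecreasing, nonnegative. -/
def MUValuation (v : ℕ → ℝ) : Prop := v 0 = 0 ∧ Monotone v ∧ ∀ s, 0 ≤ v s

/-- The allocation of the golden ratio mechanism on the domain `v₁(2) > v₂(2)`:
if `v₂(1) > r·v₁(2)` (with `r = (√5 - 1)/2`) then each bidder gets one unit,
otherwise bidder 1 gets both units.  Each winner pays his own bid (pay-as-bid). -/
noncomputable def goldenAlloc (v₁ v₂ : ℕ → ℝ) : ℕ × ℕ :=
  if v₂ 1 > ((Real.sqrt 5 - 1) / 2) * v₁ 2 then (1, 1) else (2, 0)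

/-- The ratio `r = (√5 - 1)/2` lies in `(0, 1)` and satisfies `r² + r = 1`. -/
lemma golden_ratio_spec :
    0 < (Real.sqrt 5 - 1) / 2 ∧ (Real.sqrt 5 - 1) / 2 < 1 ∧
      ((Real.sqrt 5 - 1) / 2) ^ 2 + (Real.sqrt 5 - 1) / 2 = 1 := by
  have hsq : Real.sqrt 5 ^ 2 = 5 := Real.sq_sqrt (by norm_num)
  have hnonneg := Real.sqrt_nonneg 5
  refine ⟨?_, ?_, ?_⟩ <;> nlinarith

/-- on the domain of profiles with `v₁(2) > v₂(2)`, the golden ratio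
mechanism is strategy-proof for value bidders against misreports staying in the domain,
and its pay-as-bid revenue is at least `r = (√5-1)/2` times the optimal revenue
`max (v₁ 2) (max (v₁ 1 + v₂ 1) (v₂ 2))`. -/
theorem golden_ratio_mechanism_truthful_and_golden_revenue
    (v₁ v₂ : ℕ → ℝ) (h₁ : MUValuation v₁) (h₂ : MUValuation v₂) (hdom : v₂ 2 < v₁ 2) :
    (∀ v₁' : ℕ → ℝ, MUValuation v₁' → v₂ 2 < v₁' 2 →
      v₁ (goldenAlloc v₁' v₂).1 < v₁' (goldenAlloc v₁' v₂).1 ∨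
        v₁ (goldenAlloc v₁' v₂).1 ≤ v₁ (goldenAlloc v₁ v₂).1) ∧
    (∀ v₂' : ℕ → ℝ, MUValuation v₂' → v₂' 2 < v₁ 2 →
      v₂ (goldenAlloc v₁ v₂').2 < v₂' (goldenAlloc v₁ v₂').2 ∨
        v₂ (goldenAlloc v₁ v₂').2 ≤ v₂ (goldenAlloc v₁ v₂).2) ∧
    v₁ (goldenAlloc v₁ v₂).1 + v₂ (goldenAlloc v₁ v₂).2 ≥
      ((Real.sqrt 5 - 1) / 2) * max (v₁ 2) (max (v₁ 1 + v₂ 1) (v₂ 2)) := by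
  obtain ⟨hr0, hr1, hr⟩ := golden_ratio_spec
  unfold goldenAlloc
  generalize (Real.sqrt 5 - 1) / 2 = r at *
  obtain ⟨-, hmono₁, hpos₁⟩ := h₁
  obtain ⟨hzero₂, -, hpos₂⟩ := h₂
  have h12 : v₁ 1 ≤ v₁ 2 := hmono₁ one_le_two
  refine ⟨fun v₁' _ _ => ?_, fun v₂' _ _ => ?_, ?_⟩
  · by_cases hmis : v₂ 1 > r * v₁' 2 <;> by_cases htrue : v₂ 1 > r * v₁ 2 <;>
      simp only [hmis, htrue, if_true, if_false]
    · exact Or.inr le_rfl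
    · exact Or.inr h12
    · exact Or.inl (lt_of_mul_lt_mul_left (htrue.trans_le (not_lt.mp hmis)) hr0.le)
    · exact Or.inr le_rfl
  · by_cases hmis : v₂' 1 > r * v₁ 2 <;> by_cases htrue : v₂ 1 > r * v₁ 2 <;>
      simp only [hmis, htrue, if_true, if_false]
    · exact Or.inr le_rfl
    · exact Or.inl ((not_lt.mp htrue).trans_lt hmis)
    · exact Or.inr (hzero₂.trans_le (hpos₂ 1))
    · exact Or.inr le_rfl
  · rw [ge_iff_le, mul_max_of_nonneg _ _ hr0.le, mul_max_of_nonneg _ _ hr0.le]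
    have hdom' : r * v₂ 2 ≤ r * v₁ 2 := mul_le_mul_of_nonneg_left hdom.le hr0.le
    split_ifs with hsplit
    · have hsum : r * (v₁ 1 + v₂ 1) ≤ v₁ 1 + v₂ 1 :=
        mul_le_of_le_one_left (add_nonneg (hpos₁ 1) (hpos₂ 1)) hr1.le
      exact max_le (by linarith [hpos₁ 1]) (max_le hsum (by linarith [hpos₁ 1]))
    · have hle : r * v₁ 2 ≤ v₁ 2 := mul_le_of_le_one_left (hpos₁ 2) hr1.le
      have hsum : r * (v₁ 1 + v₂ 1) ≤ v₁ 2 :=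
        calc r * (v₁ 1 + v₂ 1) ≤ r * (v₁ 2 + r * v₁ 2) := by
              gcongr
              exact not_lt.mp hsplit
          _ = (r ^ 2 + r) * v₁ 2 := by ring
          _ = v₁ 2 := by rw [hr, one_mul]
      simp only [hzero₂, add_zero]
      exact max_le hle (max_le hsum (hdom'.trans hle))
end

section
/- Let r = (√5 − 1)/2 and let θ, α, β be real numbers with 0 ≤ β ≤ θ and α ≥ 0. Then (if α > r·θ then α + β else θ) ≥ r · max(θ, α + β). -/
/-- revenue guarantee of Case 1 of the golden ratio mechanism. With
`r = (√5 - 1)/2`, `θ = v₁(2)`, `β = v₁(1)`, `α = v₂(1)`, `0 ≤ β ≤ θ`, `0 ≤ α`, we have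
`(if α > r·θ then α + β else θ) ≥ r · max(θ, α + β)`. -/
theorem goldenRatio_case1_revenue (θ α β : ℝ) (hβ0 : 0 ≤ β) (hβθ : β ≤ θ) (hα : 0 ≤ α) :
    (if α > ((Real.sqrt 5 - 1) / 2) * θ then α + β else θ) ≥
      ((Real.sqrt 5 - 1) / 2) * max θ (α + β) := by
  have h5 : Real.sqrt 5 ^ 2 = 5 := Real.sq_sqrt (by norm_num)
  have hs0 : 0 ≤ Real.sqrt 5 := Real.sqrt_nonneg 5
  obtain ⟨r, hr⟩ : ∃ r, r = (Real.sqrt 5 - 1) / 2 := ⟨_, rfl⟩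
  rw [← hr]
  have hr_mul : r * (1 + r) = 1 := by rw [hr]; linarith
  have hr0 : 0 ≤ r := by rw [hr]; nlinarith
  have hr1 : r ≤ 1 := by nlinarith
  have hθ : 0 ≤ θ := hβ0.trans hβθ
  rw [ge_iff_le, mul_max_of_nonneg _ _ hr0, max_le_iff]
  split_ifs with h
  · exact ⟨by linarith, mul_le_of_le_one_left (by linarith) hr1⟩
  · refine ⟨mul_le_of_le_one_left hθ hr1, ?_⟩
    calc r * (α + β) ≤ r * (r * θ + θ) := by gcongr; exact not_lt.mp h
      _ = r * (1 + r) * θ := by ring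
      _ = θ := by rw [hr_mul, one_mul]
end

section
/- For every ε > 0 and every deterministic mechanism (f, p) for 2 bidders and 2 identical units, defined on the domain of profiles with v_1(2) > v_2(2) (bidder 1 is the public strongest bidder), that is individually rational and truthful for value bidders, there exists a profile v in the domain for which the revenue Σ_i p_i(v) is strictly less than ((√5 − 1)/2 + ε) times the optimal revenue. -/
/-- Optimal revenue with two bidders and `m` identical units: the maximum over
allocations `(s₁, s₂)` with `s₁ + s₂ ≤ m` of `v₁(s₁) + v₂(s₂)`. -/
noncomputable def optRevTwo (m : ℕ) (v₁ v₂ : ℕ → ℝ) : ℝ :=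
  sSup {x : ℝ | ∃ s₁ s₂ : ℕ, s₁ + s₂ ≤ m ∧ x = v₁ s₁ + v₂ s₂}

/-- The valuation worth `a` for a single unit and `b` for two or more units. -/
def twoStepValuation (a b : ℝ) : ℕ → ℝ
  | 0 => 0
  | 1 => a
  | _ + 2 => b

theorem muValuation_twoStepValuation {a b : ℝ} (ha : 0 ≤ a) (hab : a ≤ b) :
    MUValuation (twoStepValuation a b) := by
  refine ⟨rfl, monotone_nat_of_le_succ ?_, ?_⟩
  · rintro (_ | _ | n) <;> simp [twoStepValuation, ha, hab]
  · rintro (_ | _ | n) <;> simp [twoStepValuation, ha, ha.trans hab]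

theorem le_optRevTwo {m s₁ s₂ : ℕ} {v₁ v₂ : ℕ → ℝ} (h₁ : MUValuation v₁)
    (h₂ : MUValuation v₂) (hs : s₁ + s₂ ≤ m) : v₁ s₁ + v₂ s₂ ≤ optRevTwo m v₁ v₂ := by
  refine le_csSup ⟨v₁ m + v₂ m, ?_⟩ ⟨s₁, s₂, hs, rfl⟩
  rintro x ⟨t₁, t₂, ht, rfl⟩
  exact add_le_add (h₁.2.1 (by omega)) (h₂.2.1 (by omega))

/-- for every `ε > 0`, every deterministic, individually rational
mechanism for 2 bidders and 2 identical units on the domain `v₁(2) > v₂(2)` (bidder 1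
is the public strongest bidder) that is truthful for value bidders has a profile in the
domain on which its revenue is less than `((√5 - 1)/2 + ε)` times the optimal revenue. -/
theorem no_truthful_2x2_mechanism_beats_golden_ratio
    (ε : ℝ) (hε : 0 < ε)
    (f : (ℕ → ℝ) → (ℕ → ℝ) → ℕ × ℕ) (p : (ℕ → ℝ) → (ℕ → ℝ) → ℝ × ℝ)
    (hfeas : ∀ v₁ v₂, MUValuation v₁ → MUValuation v₂ → v₂ 2 < v₁ 2 →
      (f v₁ v₂).1 + (f v₁ v₂).2 ≤ 2)
    (hIR : ∀ v₁ v₂, MUValuation v₁ → MUValuation v₂ → v₂ 2 < v₁ 2 →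
      (p v₁ v₂).1 ≤ v₁ (f v₁ v₂).1 ∧ (p v₁ v₂).2 ≤ v₂ (f v₁ v₂).2)
    (htruth₁ : ∀ v₁ v₂ v₁', MUValuation v₁ → MUValuation v₂ → MUValuation v₁' →
      v₂ 2 < v₁ 2 → v₂ 2 < v₁' 2 →
      ((p v₁' v₂).1 ≤ v₁ (f v₁' v₂).1 → v₁ (f v₁' v₂).1 ≤ v₁ (f v₁ v₂).1))
    (htruth₂ : ∀ v₁ v₂ v₂', MUValuation v₁ → MUValuation v₂ → MUValuation v₂' →
      v₂ 2 < v₁ 2 → v₂' 2 < v₁ 2 →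
      ((p v₁ v₂').2 ≤ v₂ (f v₁ v₂').2 → v₂ (f v₁ v₂').2 ≤ v₂ (f v₁ v₂).2)) :
    ∃ v₁ v₂ : ℕ → ℝ, MUValuation v₁ ∧ MUValuation v₂ ∧ v₂ 2 < v₁ 2 ∧
      (p v₁ v₂).1 + (p v₁ v₂).2 <
        ((Real.sqrt 5 - 1) / 2 + ε) * optRevTwo 2 v₁ v₂ := by
  by_contra! hrev
  -- `g` is the golden ratio and `g - 1 = (√5 - 1) / 2` its inverse.
  obtain ⟨g, hg⟩ : ∃ g : ℝ, g = (Real.sqrt 5 + 1) / 2 := ⟨_, rfl⟩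
  have hsq : Real.sqrt 5 ^ 2 = 5 := Real.sq_sqrt (by norm_num)
  have hratio : (Real.sqrt 5 - 1) / 2 = g - 1 := by rw [hg]; ring
  have hgg : g * g = g + 1 := by rw [hg]; linarith
  have hg1 : 3 / 2 < g := by
    have : (2 : ℝ) < Real.sqrt 5 := Real.lt_sqrt_of_sq_lt (by norm_num)
    linarith
  rw [hratio] at hrev
  have hV₂ : MUValuation (twoStepValuation 1 1) :=
    muValuation_twoStepValuation (by norm_num) le_rfl
  have hV : MUValuation (twoStepValuation 0 g) :=
    muValuation_twoStepValuation le_rfl (by linarith)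
  have hW : MUValuation (twoStepValuation (g + ε) (g + 2 * ε)) :=
    muValuation_twoStepValuation (by linarith) (by linarith)
  have hdV : twoStepValuation 1 1 2 < twoStepValuation 0 g 2 := by
    simp only [twoStepValuation]; linarith
  have hdW : twoStepValuation 1 1 2 < twoStepValuation (g + ε) (g + 2 * ε) 2 := by
    simp only [twoStepValuation]; linarith
  generalize hv₂ : twoStepValuation 1 1 = v₂ at *
  generalize hv : twoStepValuation 0 g = v at *
  generalize hw : twoStepValuation (g + ε) (g + 2 * ε) = w at *
  have hv₂1 : v₂ 1 = 1 := by rw [← hv₂]; rfl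
  have hv₂2 : v₂ 2 = 1 := by rw [← hv₂]; rfl
  have hv1 : v 1 = 0 := by rw [← hv]; rfl
  have hv2 : v 2 = g := by rw [← hv]; rfl
  have hw1 : w 1 = g + ε := by rw [← hw]; rfl
  have hw2 : w 2 = g + 2 * ε := by rw [← hw]; rfl
  -- A bidder 1 who only values the pair, at `g`, has to win both units.
  have hwin : (f v v₂).1 = 2 := by
    have hf := hfeas v v₂ hV hV₂ hdV
    by_contra hne
    have hfst : v (f v v₂).1 ≤ v 1 := hV.2.1 (by omega)
    have hsnd : v₂ (f v v₂).2 ≤ v₂ 2 := hV₂.2.1 (by omega)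
    have hopt : v 2 + v₂ 0 ≤ optRevTwo 2 v v₂ := le_optRevTwo hV hV₂ le_rfl
    rw [hv2, hV₂.1] at hopt
    have hr := hrev v v₂ hV hV₂ hdV
    obtain ⟨hp₁, hp₂⟩ := hIR v v₂ hV hV₂ hdV
    nlinarith
  -- Hence the pair is affordable for `w`, who strictly prefers it to a single unit.
  have hwin' : (f w v₂).1 = 2 := by
    have hf := hfeas w v₂ hW hV₂ hdW
    have hp := (hIR v v₂ hV hV₂ hdV).1
    have ht := htruth₁ w v₂ v hW hV₂ hV hdW hdV
    rw [hwin] at hp ht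
    have ht' := ht (by linarith)
    by_contra hne
    have hfst : w (f w v₂).1 ≤ w 1 := hW.2.1 (by omega)
    linarith
  have hlose : (f w v₂).2 = 0 := by
    have hf := hfeas w v₂ hW hV₂ hdW
    omega
  have hopt : w 1 + v₂ 1 ≤ optRevTwo 2 w v₂ := le_optRevTwo hW hV₂ le_rfl
  have hr := hrev w v₂ hW hV₂ hdW
  obtain ⟨hp₁, hp₂⟩ := hIR w v₂ hW hV₂ hdW
  rw [hwin'] at hp₁
  rw [hlose, hV₂.1] at hp₂
  have hmul := mul_le_mul_of_nonneg_left hopt (show 0 ≤ g - 1 + ε by linarith)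
  rw [hw1, hv₂1] at hmul
  nlinarith
end

section
/- Let θ, α, β be real numbers with θ > 0, 0 ≤ α ≤ θ and 0 ≤ β ≤ θ. Then (α/θ)·(α + β) + (1 − α/θ)·θ ≥ (3/4)·max(θ, α + β). -/
/-- the expected-revenue guarantee of the randomized 2×2 mechanism.
With `θ = v₁(2) > 0`, `β = v₁(1) ≤ θ` and `α = v₂(1) ≤ θ`, assigning one unit to each
bidder with probability `α/θ` (collecting `α + β`) and both units to bidder 1 otherwise
(collecting `θ`) yields expected revenue at least `(3/4)·max(θ, α + β)`. -/
theorem randomized_2x2_revenue (θ α β : ℝ) (hθ : 0 < θ)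
    (hα0 : 0 ≤ α) (hαθ : α ≤ θ) (hβ0 : 0 ≤ β) (hβθ : β ≤ θ) :
    (α / θ) * (α + β) + (1 - α / θ) * θ ≥ (3 / 4) * max θ (α + β) := by
  have revenue_eq : (α / θ) * (α + β) + (1 - α / θ) * θ
      = (α * (α + β) + (θ - α) * θ) / θ := by
    field_simp
  rw [revenue_eq, ge_iff_le, le_div_iff₀ hθ]
  rcases max_cases θ (α + β) with ⟨h, -⟩ | ⟨h, -⟩ <;> rw [h]
  · nlinarith [sq_nonneg (α - θ / 2), mul_nonneg hα0 hβ0]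
  · rcases le_total (3 / 4 * θ) α with hα | hα
    · nlinarith [sq_nonneg (α - 7 / 8 * θ), mul_nonneg (sub_nonneg.2 hα) hβ0, mul_pos hθ hθ]
    · nlinarith [sq_nonneg (α - 3 / 8 * θ),
        mul_nonneg (sub_nonneg.2 hα) (sub_nonneg.2 hβθ), mul_pos hθ hθ]
end

section
/- For every ε > 0 and every deterministic mechanism (f, p) for 2 bidders and 2 heterogeneous items A and B, defined on the domain of profiles with v_1({A,B}) > v_2({A,B}) (bidder 1 is the public strongest bidder), that is individually rational and truthful for value bidders, there exists a profile v in the domain for which the revenue Σ_i p_i(v) is strictly less than (1/2 + ε) times the optimal revenue. -/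
/-- A valuation on subsets of the two heterogeneous items (`Fin 2`):
`v ∅ = 0`, monotone (free disposal), nonnegative. -/
def HetValuation (v : Finset (Fin 2) → ℝ) : Prop :=
  v ∅ = 0 ∧ (∀ S T, S ⊆ T → v S ≤ v T) ∧ ∀ S, 0 ≤ v S

/-- Optimal revenue with two bidders and two heterogeneous items: the maximum over
allocations of disjoint bundles `(S₁, S₂)` of `v₁(S₁) + v₂(S₂)`. -/
noncomputable def optRevHet (v₁ v₂ : Finset (Fin 2) → ℝ) : ℝ :=
  sSup {x : ℝ | ∃ S₁ S₂ : Finset (Fin 2), Disjoint S₁ S₂ ∧ x = v₁ S₁ + v₂ S₂}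

/-- The valuation worth `a` on `{0}`, `b` on `{1}` and `t` on both items. -/
noncomputable def pairVal (a b t : ℝ) (S : Finset (Fin 2)) : ℝ :=
  if 0 ∈ S then (if 1 ∈ S then t else a) else (if 1 ∈ S then b else 0)

@[simp]
theorem pairVal_univ (a b t : ℝ) : pairVal a b t Finset.univ = t := by
  simp [pairVal]

theorem hetValuation_pairVal {a b t : ℝ} (ha : 0 ≤ a) (hb : 0 ≤ b) (hat : a ≤ t)
    (hbt : b ≤ t) : HetValuation (pairVal a b t) := by
  refine ⟨by simp [pairVal], fun S T hST => ?_, fun S => ?_⟩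
  · have h0 := @hST 0
    have h1 := @hST 1
    unfold pairVal
    split_ifs <;> first | linarith | (exfalso; tauto)
  · unfold pairVal
    split_ifs <;> linarith

theorem HetValuation.le_univ {v : Finset (Fin 2) → ℝ} (hv : HetValuation v)
    (S : Finset (Fin 2)) : v S ≤ v Finset.univ :=
  hv.2.1 S _ (Finset.subset_univ S)

theorem add_le_optRevHet {v₁ v₂ : Finset (Fin 2) → ℝ} (h₁ : HetValuation v₁)
    (h₂ : HetValuation v₂) {S₁ S₂ : Finset (Fin 2)} (h : Disjoint S₁ S₂) :
    v₁ S₁ + v₂ S₂ ≤ optRevHet v₁ v₂ := by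
  refine le_csSup ⟨v₁ Finset.univ + v₂ Finset.univ, ?_⟩ ⟨S₁, S₂, h, rfl⟩
  rintro x ⟨T₁, T₂, -, rfl⟩
  exact add_le_add (h₁.le_univ T₁) (h₂.le_univ T₂)

/-- for every `ε > 0`, every deterministic, individually rational
mechanism for 2 bidders and 2 heterogeneous items on the domain `v₁({A,B}) > v₂({A,B})`
(bidder 1 is the public strongest bidder) that is truthful for value bidders has a
profile in the domain on which its revenue is less than `(1/2 + ε)` times the optimal
revenue. -/
theorem no_truthful_two_heterogeneous_items_mechanism_beats_one_half
    (ε : ℝ) (hε : 0 < ε)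
    (f : (Finset (Fin 2) → ℝ) → (Finset (Fin 2) → ℝ) → Finset (Fin 2) × Finset (Fin 2))
    (p : (Finset (Fin 2) → ℝ) → (Finset (Fin 2) → ℝ) → ℝ × ℝ)
    (hfeas : ∀ v₁ v₂, HetValuation v₁ → HetValuation v₂ →
      v₂ Finset.univ < v₁ Finset.univ → Disjoint (f v₁ v₂).1 (f v₁ v₂).2)
    (hIR : ∀ v₁ v₂, HetValuation v₁ → HetValuation v₂ →
      v₂ Finset.univ < v₁ Finset.univ →
      (p v₁ v₂).1 ≤ v₁ (f v₁ v₂).1 ∧ (p v₁ v₂).2 ≤ v₂ (f v₁ v₂).2)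
    (htruth₁ : ∀ v₁ v₂ v₁', HetValuation v₁ → HetValuation v₂ → HetValuation v₁' →
      v₂ Finset.univ < v₁ Finset.univ → v₂ Finset.univ < v₁' Finset.univ →
      ((p v₁' v₂).1 ≤ v₁ (f v₁' v₂).1 → v₁ (f v₁' v₂).1 ≤ v₁ (f v₁ v₂).1))
    (htruth₂ : ∀ v₁ v₂ v₂', HetValuation v₁ → HetValuation v₂ → HetValuation v₂' →
      v₂ Finset.univ < v₁ Finset.univ → v₂' Finset.univ < v₁ Finset.univ →
      ((p v₁ v₂').2 ≤ v₂ (f v₁ v₂').2 → v₂ (f v₁ v₂').2 ≤ v₂ (f v₁ v₂).2)) :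
    ∃ v₁ v₂ : Finset (Fin 2) → ℝ, HetValuation v₁ ∧ HetValuation v₂ ∧
      v₂ Finset.univ < v₁ Finset.univ ∧
      (p v₁ v₂).1 + (p v₁ v₂).2 < (1 / 2 + ε) * optRevHet v₁ v₂ := by
  by_contra! hrev
  have hv₁ : HetValuation (pairVal (1 + ε) 1 (1 + ε)) := by
    apply hetValuation_pairVal <;> linarith
  have hv₂ : HetValuation (pairVal (1 + ε / 2) 1 (1 + ε / 2)) := by
    apply hetValuation_pairVal <;> linarith
  have hw₁ : HetValuation (pairVal 1 0 (1 + ε)) := by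
    apply hetValuation_pairVal <;> linarith
  have hw₂ : HetValuation (pairVal 1 0 1) := by
    apply hetValuation_pairVal <;> norm_num
  set v₁ := pairVal (1 + ε) 1 (1 + ε)
  set v₂ := pairVal (1 + ε / 2) 1 (1 + ε / 2)
  set w₁ := pairVal 1 0 (1 + ε)
  set w₂ := pairVal 1 0 1
  have hlt : v₂ Finset.univ < v₁ Finset.univ := by simp [v₁, v₂]; linarith
  have hlt₁ : v₂ Finset.univ < w₁ Finset.univ := by simp [w₁, v₂]; linarith
  have hlt₂ : w₂ Finset.univ < v₁ Finset.univ := by simp [v₁, w₂]; linarith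
  -- Item `0` goes to a bidder who only wants it, since the other one pays less than `1 + 2 * ε`.
  have hmem₁ : 0 ∈ (f w₁ v₂).1 := by
    by_contra hmem
    have hopt : w₁ {0} + v₂ {1} ≤ optRevHet w₁ v₂ := add_le_optRevHet hw₁ hv₂ (by simp)
    have hsum : w₁ {0} + v₂ {1} = 2 := by norm_num [w₁, v₂, pairVal]
    have hzero : w₁ (f w₁ v₂).1 = 0 := by simp [w₁, pairVal, hmem]
    have hle := hv₂.le_univ (f w₁ v₂).2
    have huniv : v₂ Finset.univ = 1 + ε / 2 := pairVal_univ _ _ _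
    have hir := hIR _ _ hw₁ hv₂ hlt₁
    have := hrev _ _ hw₁ hv₂ hlt₁
    nlinarith
  have hmem₂ : 0 ∈ (f v₁ w₂).2 := by
    by_contra hmem
    have hopt : v₁ {1} + w₂ {0} ≤ optRevHet v₁ w₂ := add_le_optRevHet hv₁ hw₂ (by simp)
    have hsum : v₁ {1} + w₂ {0} = 2 := by norm_num [v₁, w₂, pairVal]
    have hzero : w₂ (f v₁ w₂).2 = 0 := by simp [w₂, pairVal, hmem]
    have hle := hv₁.le_univ (f v₁ w₂).1
    have huniv : v₁ Finset.univ = 1 + ε := pairVal_univ _ _ _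
    have hir := hIR _ _ hv₁ hw₂ hlt₂
    have := hrev _ _ hv₁ hw₂ hlt₂
    nlinarith
  -- Imitating such a bidder secures item `0`, so at `(v₁, v₂)` both bidders must receive it.
  have hgets₁ : 0 ∈ (f v₁ v₂).1 := by
    by_contra hmem
    have hval : v₁ (f w₁ v₂).1 = 1 + ε := by simp [v₁, pairVal, hmem₁]
    have hpay : w₁ (f w₁ v₂).1 ≤ 1 + ε := (hw₁.le_univ _).trans_eq (pairVal_univ _ _ _)
    have hle := htruth₁ v₁ v₂ w₁ hv₁ hv₂ hw₁ hlt hlt₁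
      ((hIR _ _ hw₁ hv₂ hlt₁).1.trans (hpay.trans_eq hval.symm))
    have hone : v₁ (f v₁ v₂).1 ≤ 1 := by
      simp only [v₁, pairVal, hmem, if_false]
      split_ifs <;> norm_num
    linarith
  have hgets₂ : 0 ∈ (f v₁ v₂).2 := by
    by_contra hmem
    have hval : v₂ (f v₁ w₂).2 = 1 + ε / 2 := by simp [v₂, pairVal, hmem₂]
    have hpay : w₂ (f v₁ w₂).2 ≤ 1 := (hw₂.le_univ _).trans_eq (pairVal_univ _ _ _)
    have hle := htruth₂ v₁ v₂ w₂ hv₁ hv₂ hw₂ hlt hlt₂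
      ((hIR _ _ hv₁ hw₂ hlt₂).2.trans (by linarith))
    have hone : v₂ (f v₁ v₂).2 ≤ 1 := by
      simp only [v₂, pairVal, hmem, if_false]
      split_ifs <;> norm_num
    linarith
  exact Finset.disjoint_left.1 (hfeas _ _ hv₁ hv₂ hlt) hgets₁ hgets₂
end
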